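/- Let 0<p<1 and let (x_n)_{n∈ℕ} together with (x_n*)_{n∈ℕ} be a quasi-greedy basis of ℓ_p. Then there exist constants 0<c≤C<∞ such that for every m≥1, c·m^{1/p} ≤ φ_l(m) and φ_u(m) ≤ C·m^{1/p}. In particular, the basis is democratic. -/

import Mathlib

open scoped BigOperators

/-- For `0 < p < 1`, membership in `ℓ_p`: the sequence `(|f j|^p)_j` is summable. -/
def MemLpSeq (p : ℝ) (f : ℕ → ℝ) : Prop := Summable fun j => |f j| ^ p

/-- The `p`-norm `‖f‖_p = (∑_j |f j|^p)^(1/p)`. -/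
noncomputable def pNorm (p : ℝ) (f : ℕ → ℝ) : ℝ := (∑' j, |f j| ^ p) ^ (1 / p)

/-- `A` is a greedy set for the coefficient sequence `coef`. -/
def GreedySet (coef : ℕ → ℝ) (A : Finset ℕ) : Prop :=
  ∀ n ∈ A, ∀ k ∉ A, |coef k| ≤ |coef n|

/-- `(x_n)` together with bounded linear functionals `(x_n^*)` is a
(semi-normalized, fundamental, M-bounded Markushevich) basis of `ℓ_p`. -/
structure IsLpBasis (p : ℝ) (x : ℕ → ℕ → ℝ) (xs : ℕ → (ℕ → ℝ) → ℝ) : Prop where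
  mem : ∀ n, MemLpSeq p (x n)
  map_add : ∀ n f g, MemLpSeq p f → MemLpSeq p g → xs n (f + g) = xs n f + xs n g
  map_smul : ∀ n (c : ℝ) (f : ℕ → ℝ), MemLpSeq p f → xs n (fun j => c * f j) = c * xs n f
  bdd : ∃ b : ℝ, ∀ n f, MemLpSeq p f → |xs n f| ≤ b * pNorm p f
  biorth : ∀ m n, xs m (x n) = if m = n then (1 : ℝ) else 0
  dense : ∀ f, MemLpSeq p f → ∀ ε > 0, ∃ (A : Finset ℕ) (c : ℕ → ℝ),
    pNorm p (fun j => f j - ∑ n ∈ A, c n * x n j) < ε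
  norm_lb : ∃ c > 0, ∀ n, c ≤ pNorm p (x n)
  norm_ub : ∃ C : ℝ, ∀ n, pNorm p (x n) ≤ C

/-- The basis is quasi-greedy: greedy projections are uniformly bounded. -/
def QuasiGreedy (p : ℝ) (x : ℕ → ℕ → ℝ) (xs : ℕ → (ℕ → ℝ) → ℝ) : Prop :=
  ∃ C ≥ (1 : ℝ), ∀ f, MemLpSeq p f → ∀ A : Finset ℕ,
    GreedySet (fun n => xs n f) A →
    pNorm p (fun j => ∑ n ∈ A, xs n f * x n j) ≤ C * pNorm p f

/-!
We measure vectors by the modular `‖f‖_p ^ p`, which is subadditive. A quasi-greedy basis is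
suppression unconditional for constant coefficients, so signs may be changed freely, Khintchine's
inequality applies to `∑_{n ∈ A} x_n`, and coefficients of nearly equal modulus may be made equal.

Suppose that `‖∑_{n ∈ A} x_n‖_p ^ p` grows at least like `|A| ^ β`. A layer
`{n | t < |x_n^*(f)| ≤ r t}` of a unit vector `f` is a difference of two greedy sets, hence has at
most a multiple of `t ^ (-p/β)` elements. So `(x_n^*(e_j))_n` is bounded in `ℓ_q`, uniformly in `j`,
for every `q > p / β`. When `q ≥ 1`, expanding the trace
`|A| = ∑_{n ∈ A} x_n^*(x_n) = ∑_j ∑_{n ∈ A} x_n(j) x_n^*(e_j)` and bounding `|x_n(j)|` by a power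
of the square function improves the growth exponent to `1 / q`. Starting from `β = p / 2` and using
`p < 1`, finitely many such improvements reach the exponent `1`.
-/

section RealInequalities

variable {ι : Type*}

theorem exists_abs_eq_one_and_eq_mul_abs (t : ℝ) : ∃ ε : ℝ, |ε| = 1 ∧ t = ε * |t| := by
  rcases abs_choice t with h | h
  · exact ⟨1, abs_one, by rw [one_mul, h]⟩
  · exact ⟨-1, by rw [abs_neg, abs_one], by rw [h, neg_one_mul, neg_neg]⟩

theorem sq_sub_pow_four_div_four_le_rpow {p u : ℝ} (hp0 : 0 < p) (hp2 : p ≤ 2) (hu : 0 ≤ u) :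
    u ^ 2 - u ^ 4 / 4 ≤ u ^ p := by
  rcases le_total u 1 with hu1 | hu1
  · have hsq : u ^ (2 : ℝ) ≤ u ^ p := Real.rpow_le_rpow_of_exponent_ge' hu hu1 hp0.le hp2
    rw [Real.rpow_two] at hsq
    linarith [pow_nonneg hu 4]
  · have hone : 1 ≤ u ^ p := Real.one_le_rpow hu1 hp0.le
    linarith [sq_nonneg (u ^ 2 / 2 - 1)]

theorem sum_abs_le_card_rpow_mul (A : Finset ι) (a : ι → ℝ) {q : ℝ} (hq : 1 ≤ q) :
    ∑ i ∈ A, |a i| ≤ (A.card : ℝ) ^ (1 - 1 / q) * (∑ i ∈ A, |a i| ^ q) ^ (1 / q) := by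
  have hq0 : 0 < q := one_pos.trans_le hq
  have hpow := Real.rpow_le_rpow (by positivity)
    (Real.rpow_sum_le_const_mul_sum_rpow A a hq) (one_div_nonneg.2 hq0.le)
  rwa [← Real.rpow_mul (by positivity), mul_one_div_cancel hq0.ne', Real.rpow_one,
    Real.mul_rpow (by positivity) (by positivity), ← Real.rpow_mul (by positivity),
    sub_one_mul, mul_one_div_cancel hq0.ne'] at hpow

theorem rpow_le_of_le_rpow_one_sub_mul {m X β : ℝ} (hm : 0 < m) (h : m ≤ m ^ (1 - β) * X) :
    m ^ β ≤ X := by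
  have hsplit : m ^ (1 - β) * m ^ β = m := by
    rw [← Real.rpow_add hm, sub_add_cancel, Real.rpow_one]
  exact le_of_mul_le_mul_left (hsplit.trans_le h) (Real.rpow_pos_of_pos hm _)

theorem exists_geometric_layer {r b u : ℝ} (hr : 1 < r) (hu : 0 < u) (hub : u ≤ b) :
    ∃ i : ℕ, b / r * r⁻¹ ^ i < u ∧ u ≤ r * (b / r * r⁻¹ ^ i) := by
  have hb : 0 < b := hu.trans_le hub
  obtain ⟨i, hlt, hle⟩ := exists_nat_pow_near_of_lt_one (div_pos hu hb) ((div_le_one hb).2 hub)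
    (inv_pos.2 (one_pos.trans hr)) (inv_lt_one_of_one_lt₀ hr)
  rw [lt_div_iff₀ hb] at hlt
  rw [div_le_iff₀ hb] at hle
  refine ⟨i, (Eq.trans_lt ?_ hlt), hle.trans_eq ?_⟩
  · rw [pow_succ]; ring
  · field_simp

theorem sum_abs_rpow_le_of_card_le {a : ι → ℝ} {G : Finset ι} {M r s q t : ℝ} (hr : 0 ≤ r)
    (hq : 0 ≤ q) (ht : 0 < t) (hG : ∀ i ∈ G, |a i| ≤ r * t) (hcard : G.card ≤ M * t ^ (-s)) :
    ∑ i ∈ G, |a i| ^ q ≤ M * r ^ q * t ^ (q - s) :=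
  calc ∑ i ∈ G, |a i| ^ q ≤ ∑ _i ∈ G, (r * t) ^ q :=
        Finset.sum_le_sum fun i hi => Real.rpow_le_rpow (abs_nonneg _) (hG i hi) hq
    _ = G.card * (r * t) ^ q := by rw [Finset.sum_const, nsmul_eq_mul]
    _ ≤ M * t ^ (-s) * (r * t) ^ q := by gcongr
    _ = M * r ^ q * t ^ (q - s) := by
        rw [Real.mul_rpow hr ht.le, sub_eq_add_neg, Real.rpow_add ht]; ring

theorem sum_abs_rpow_le_of_card_layer_le {a : ι → ℝ} {M r s q b : ℝ} (hr : 1 < r) (hb : 0 < b)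
    (hq : 0 < q) (hsq : s < q) (hab : ∀ i, |a i| ≤ b)
    (hcard : ∀ t > 0, ∀ G : Finset ι, (∀ i ∈ G, t < |a i| ∧ |a i| ≤ r * t) →
      G.card ≤ M * t ^ (-s)) (A : Finset ι) :
    ∑ i ∈ A, |a i| ^ q ≤ M * r ^ q * (b / r) ^ (q - s) * (1 - r⁻¹ ^ (q - s))⁻¹ := by
  classical
  have hr0 : 0 < r := one_pos.trans hr
  have hM : 0 ≤ M := by simpa using hcard 1 one_pos ∅ (by simp)
  set ρ : ℝ := r⁻¹ ^ (q - s)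
  set D : ℝ := M * r ^ q * (b / r) ^ (q - s)
  have hρ1 : ρ < 1 :=
    Real.rpow_lt_one (by positivity) (inv_lt_one_of_one_lt₀ hr) (sub_pos.2 hsq)
  have hlayer : ∀ i, ∃ k : ℕ, a i ≠ 0 →
      b / r * r⁻¹ ^ k < |a i| ∧ |a i| ≤ r * (b / r * r⁻¹ ^ k) := fun i => by
    by_cases hi : a i = 0
    · exact ⟨0, fun h => absurd hi h⟩
    · exact (exists_geometric_layer hr (abs_pos.2 hi) (hab i)).imp fun k hk _ => hk
  choose layer hlayer using hlayer
  have hsum_layer : ∀ k, ∑ i ∈ A with a i ≠ 0 ∧ layer i = k, |a i| ^ q ≤ D * ρ ^ k := fun k => by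
    have hmem : ∀ i ∈ A.filter fun i => a i ≠ 0 ∧ layer i = k,
        b / r * r⁻¹ ^ k < |a i| ∧ |a i| ≤ r * (b / r * r⁻¹ ^ k) := fun i hi => by
      obtain ⟨-, hi0, rfl⟩ := Finset.mem_filter.1 hi
      exact hlayer i hi0
    have ht : 0 < b / r * r⁻¹ ^ k := by positivity
    refine (sum_abs_rpow_le_of_card_le hr0.le hq.le ht (fun i hi => (hmem i hi).2)
      (hcard _ ht _ hmem)).trans_eq ?_
    rw [Real.mul_rpow (by positivity) (by positivity), ← Real.rpow_pow_comm (by positivity),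
      ← mul_assoc]
  calc ∑ i ∈ A, |a i| ^ q = ∑ i ∈ A with a i ≠ 0, |a i| ^ q := by
        refine (Finset.sum_filter_of_ne (p := fun i => a i ≠ 0) fun i _ hne hi => hne ?_).symm
        rw [hi, abs_zero, Real.zero_rpow hq.ne']
    _ = ∑ k ∈ A.image layer, ∑ i ∈ A with a i ≠ 0 ∧ layer i = k, |a i| ^ q := by
        simp_rw [← Finset.filter_filter]
        exact (Finset.sum_fiberwise_of_maps_to (fun i hi =>
          Finset.mem_image_of_mem _ (Finset.mem_filter.1 hi).1) _).symm
    _ ≤ ∑ k ∈ A.image layer, D * ρ ^ k := Finset.sum_le_sum fun k _ => hsum_layer k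
    _ ≤ D * (1 - ρ)⁻¹ := by
        rw [← Finset.mul_sum, ← tsum_geometric_of_lt_one (by positivity) hρ1]
        gcongr
        exact (summable_geometric_of_lt_one (by positivity) hρ1).sum_le_tsum _
          fun k _ => by positivity

end RealInequalities

section Khintchine

variable {ι : Type*} [DecidableEq ι]

/-- The sign pattern equal to `1` on `T` and to `-1` off `T`. As `T` runs through the subsets of a
finite set `A`, its restriction to `A` runs through all choices of signs, so sums over
`A.powerset` play the role of Rademacher averages. -/
def subsetSign (T : Finset ι) (k : ι) : ℝ := if k ∈ T then 1 else -1

theorem abs_subsetSign (T : Finset ι) (k : ι) : |subsetSign T k| = 1 := by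
  unfold subsetSign; split_ifs <;> simp

theorem sum_powerset_insert_subsetSign {M : Type*} [AddCommMonoid M] {A : Finset ι} {n : ι}
    (hn : n ∉ A) (a : ι → ℝ) (F : ℝ → M) :
    ∑ T ∈ (insert n A).powerset, F (∑ k ∈ insert n A, subsetSign T k * a k) =
      ∑ T ∈ A.powerset, (F (∑ k ∈ A, subsetSign T k * a k - a n) +
        F (∑ k ∈ A, subsetSign T k * a k + a n)) := by
  rw [Finset.sum_powerset_insert hn, ← Finset.sum_add_distrib]
  refine Finset.sum_congr rfl fun T hT => ?_
  have hnT : n ∉ T := fun h => hn (Finset.mem_powerset.1 hT h)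
  have hoff : ∑ k ∈ A, subsetSign (insert n T) k * a k = ∑ k ∈ A, subsetSign T k * a k :=
    Finset.sum_congr rfl fun k hk => by
      simp [subsetSign, Finset.mem_insert, ne_of_mem_of_not_mem hk hn]
  have hneg : subsetSign T n = -1 := if_neg hnT
  have hpos : subsetSign (insert n T) n = 1 := if_pos (Finset.mem_insert_self n T)
  rw [Finset.sum_insert hn, Finset.sum_insert hn, hoff, hneg, hpos, neg_one_mul, one_mul,
    neg_add_eq_sub, add_comm (a n)]

theorem sum_powerset_subsetSign_sq (A : Finset ι) (a : ι → ℝ) :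
    ∑ T ∈ A.powerset, (∑ k ∈ A, subsetSign T k * a k) ^ 2 = 2 ^ A.card * ∑ k ∈ A, a k ^ 2 := by
  induction A using Finset.induction_on with
  | empty => simp
  | insert n A hn ih =>
    have hpar (s : ℝ) : (s - a n) ^ 2 + (s + a n) ^ 2 = 2 * s ^ 2 + 2 * a n ^ 2 := by ring
    rw [sum_powerset_insert_subsetSign hn a (· ^ 2)]
    simp only [hpar, Finset.sum_add_distrib,
      ← Finset.mul_sum, ih, Finset.sum_const, Finset.card_powerset, Finset.sum_insert hn,
      Finset.card_insert_of_notMem hn, nsmul_eq_mul, Nat.cast_pow, Nat.cast_ofNat]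
    ring

theorem sum_powerset_subsetSign_pow_four_le (A : Finset ι) (a : ι → ℝ) :
    ∑ T ∈ A.powerset, (∑ k ∈ A, subsetSign T k * a k) ^ 4 ≤
      3 * 2 ^ A.card * (∑ k ∈ A, a k ^ 2) ^ 2 := by
  induction A using Finset.induction_on with
  | empty => simp
  | insert n A hn ih =>
    have hpar (s : ℝ) : (s - a n) ^ 4 + (s + a n) ^ 4 =
        2 * s ^ 4 + 12 * a n ^ 2 * s ^ 2 + 2 * a n ^ 4 := by ring
    rw [sum_powerset_insert_subsetSign hn a (· ^ 4)]
    simp only [hpar, Finset.sum_add_distrib,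
      ← Finset.mul_sum, sum_powerset_subsetSign_sq, Finset.sum_const, Finset.card_powerset,
      Finset.sum_insert hn, Finset.card_insert_of_notMem hn, nsmul_eq_mul, Nat.cast_pow,
      Nat.cast_ofNat, pow_succ (2 : ℝ)]
    have hrest : 0 ≤ 2 ^ A.card * a n ^ 4 := by positivity
    linarith

theorem two_pow_card_le_four_mul_sum_abs_rpow {p : ℝ} (hp0 : 0 < p) (hp2 : p ≤ 2) {A : Finset ι}
    {a : ι → ℝ} (ha : ∑ k ∈ A, a k ^ 2 = 1) :
    2 ^ A.card ≤ 4 * ∑ T ∈ A.powerset, |∑ k ∈ A, subsetSign T k * a k| ^ p := by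
  have hptwise : ∀ T ∈ A.powerset, (∑ k ∈ A, subsetSign T k * a k) ^ 2 -
      (∑ k ∈ A, subsetSign T k * a k) ^ 4 / 4 ≤ |∑ k ∈ A, subsetSign T k * a k| ^ p :=
    fun T _ => by
      simpa only [sq_abs, Even.pow_abs (by decide : Even 4)] using
        sq_sub_pow_four_div_four_le_rpow hp0 hp2 (abs_nonneg (∑ k ∈ A, subsetSign T k * a k))
  have hsum := Finset.sum_le_sum hptwise
  rw [Finset.sum_sub_distrib, ← Finset.sum_div, sum_powerset_subsetSign_sq, ha] at hsum
  have hfour := sum_powerset_subsetSign_pow_four_le A a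
  rw [ha] at hfour
  linarith

theorem khintchine_lower {p : ℝ} (hp0 : 0 < p) (hp2 : p ≤ 2) (A : Finset ι) (a : ι → ℝ) :
    2 ^ A.card * √(∑ k ∈ A, a k ^ 2) ^ p ≤
      4 * ∑ T ∈ A.powerset, |∑ k ∈ A, subsetSign T k * a k| ^ p := by
  set s := √(∑ k ∈ A, a k ^ 2)
  have hs0 : 0 ≤ s := Real.sqrt_nonneg _
  rcases hs0.eq_or_lt with hs | hs
  · rw [← hs, Real.zero_rpow hp0.ne', mul_zero]
    positivity
  have hs_sq : s ^ 2 = ∑ k ∈ A, a k ^ 2 := Real.sq_sqrt (Real.sqrt_pos.1 hs).le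
  have hnormalized : ∑ k ∈ A, (a k / s) ^ 2 = 1 := by
    simp_rw [div_pow]
    rw [← Finset.sum_div, ← hs_sq, div_self (pow_pos hs 2).ne']
  have hle := two_pow_card_le_four_mul_sum_abs_rpow hp0 hp2 hnormalized
  simp_rw [mul_div_assoc', ← Finset.sum_div, abs_div, abs_of_pos hs,
    Real.div_rpow (abs_nonneg _) hs.le] at hle
  rwa [← Finset.sum_div, mul_div_assoc', le_div_iff₀ (Real.rpow_pos_of_pos hs p)] at hle

end Khintchine

section Modular

/-- The modular `‖f‖_p ^ p = ∑_j |f j| ^ p`. It is subadditive for `p ≤ 1`, so the estimates are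
carried out for it rather than for the `p`-norm. -/
noncomputable def pModular (p : ℝ) (f : ℕ → ℝ) : ℝ := ∑' j, |f j| ^ p

variable {p : ℝ} {f g : ℕ → ℝ} {ι : Type*}

theorem memLpSeq_iff_memℓp (hp0 : 0 < p) : MemLpSeq p f ↔ Memℓp f (ENNReal.ofReal p) := by
  simp [memℓp_gen_iff, MemLpSeq, ENNReal.toReal_ofReal hp0.le, hp0]

theorem MemLpSeq.add (hp0 : 0 < p) (hf : MemLpSeq p f) (hg : MemLpSeq p g) :
    MemLpSeq p (f + g) := by
  rw [memLpSeq_iff_memℓp hp0] at *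
  exact Memℓp.add hf hg

theorem MemLpSeq.const_smul (hp0 : 0 < p) (hf : MemLpSeq p f) (c : ℝ) : MemLpSeq p (c • f) := by
  rw [memLpSeq_iff_memℓp hp0] at *
  exact Memℓp.const_smul hf c

theorem MemLpSeq.sub (hp0 : 0 < p) (hf : MemLpSeq p f) (hg : MemLpSeq p g) :
    MemLpSeq p (f - g) := by
  rw [memLpSeq_iff_memℓp hp0] at *
  exact Memℓp.sub hf hg

theorem MemLpSeq.sum_smul (hp0 : 0 < p) {A : Finset ι} {x : ι → ℕ → ℝ}
    (hx : ∀ i ∈ A, MemLpSeq p (x i)) (c : ι → ℝ) : MemLpSeq p (∑ i ∈ A, c i • x i) := by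
  rw [memLpSeq_iff_memℓp hp0, Finset.sum_fn]
  exact Memℓp.finsetSum A fun i hi => (memLpSeq_iff_memℓp hp0).1 ((hx i hi).const_smul hp0 (c i))

theorem memLpSeq_single (hp0 : 0 < p) (j : ℕ) (t : ℝ) : MemLpSeq p (Pi.single j t) :=
  summable_of_ne_finset_zero (s := {j}) fun i hi => by
    rw [Pi.single_eq_of_ne (Finset.notMem_singleton.1 hi), abs_zero, Real.zero_rpow hp0.ne']

theorem pModular_nonneg (p : ℝ) (f : ℕ → ℝ) : 0 ≤ pModular p f :=
  tsum_nonneg fun j => by positivity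

theorem pModular_zero (hp0 : 0 < p) : pModular p 0 = 0 := by
  simp [pModular, Real.zero_rpow hp0.ne']

theorem pModular_single_one (hp0 : 0 < p) (j : ℕ) : pModular p (Pi.single j 1) = 1 := by
  rw [pModular, tsum_eq_single j fun i hi => by simp [hi, Real.zero_rpow hp0.ne']]
  simp

theorem pModular_const_smul (p c : ℝ) (f : ℕ → ℝ) :
    pModular p (c • f) = |c| ^ p * pModular p f := by
  simp_rw [pModular, Pi.smul_apply, smul_eq_mul, abs_mul,
    Real.mul_rpow (abs_nonneg _) (abs_nonneg _), tsum_mul_left]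

theorem pModular_neg (p : ℝ) (f : ℕ → ℝ) : pModular p (-f) = pModular p f := by
  simp_rw [pModular, Pi.neg_apply, abs_neg]

theorem pModular_add_le (hp0 : 0 < p) (hp1 : p ≤ 1) (hf : MemLpSeq p f) (hg : MemLpSeq p g) :
    pModular p (f + g) ≤ pModular p f + pModular p g := by
  rw [pModular, pModular, pModular, ← Summable.tsum_add hf hg]
  refine (hf.add hp0 hg).tsum_le_tsum (fun j => ?_) (Summable.add hf hg)
  exact (Real.rpow_le_rpow (abs_nonneg _) (abs_add_le (f j) (g j)) hp0.le).trans
    (Real.rpow_add_le_add_rpow (abs_nonneg _) (abs_nonneg _) hp0.le hp1)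

theorem pModular_sub_le (hp0 : 0 < p) (hp1 : p ≤ 1) (hf : MemLpSeq p f) (hg : MemLpSeq p g) :
    pModular p (f - g) ≤ pModular p f + pModular p g := by
  have hneg : MemLpSeq p (-g) := by simpa using hg.const_smul hp0 (-1)
  rw [sub_eq_add_neg, ← pModular_neg p g]
  exact pModular_add_le hp0 hp1 hf hneg

theorem pModular_sum_smul_le (hp0 : 0 < p) (hp1 : p ≤ 1) {A : Finset ι} {x : ι → ℕ → ℝ}
    (hx : ∀ i ∈ A, MemLpSeq p (x i)) (c : ι → ℝ) :
    pModular p (∑ i ∈ A, c i • x i) ≤ ∑ i ∈ A, |c i| ^ p * pModular p (x i) := by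
  simp_rw [← pModular_const_smul]
  exact Finset.le_sum_of_subadditive_on_pred (pModular p) (MemLpSeq p) (pModular_zero hp0).le
    (fun f g hf hg => pModular_add_le hp0 hp1 hf hg) (fun f g hf hg => hf.add hp0 hg)
    (fun i => c i • x i) fun i hi => (hx i hi).const_smul hp0 (c i)

theorem pNorm_eq_pModular_rpow (p : ℝ) (f : ℕ → ℝ) : pNorm p f = pModular p f ^ (1 / p) := rfl

theorem pNorm_nonneg (p : ℝ) (f : ℕ → ℝ) : 0 ≤ pNorm p f :=
  Real.rpow_nonneg (pModular_nonneg p f) _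

theorem pNorm_rpow (hp0 : 0 < p) (f : ℕ → ℝ) : pNorm p f ^ p = pModular p f := by
  rw [pNorm_eq_pModular_rpow, ← Real.rpow_mul (pModular_nonneg p f), one_div_mul_cancel hp0.ne',
    Real.rpow_one]

theorem abs_apply_le_pNorm (hp0 : 0 < p) (hf : MemLpSeq p f) (j : ℕ) : |f j| ≤ pNorm p f := by
  have hle : |f j| ^ p ≤ pModular p f := hf.le_tsum j fun i _ => by positivity
  rwa [← pNorm_rpow hp0, Real.rpow_le_rpow_iff (abs_nonneg _) (pNorm_nonneg p f) hp0] at hle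

theorem abs_apply_le_mul_rpow (hp0 : 0 < p) (hp1 : p ≤ 1) (hf : MemLpSeq p f) (j : ℕ) :
    |f j| ≤ pNorm p f ^ (1 - p) * |f j| ^ p := by
  rcases (abs_nonneg (f j)).eq_or_lt with hzero | hpos
  · rw [← hzero, Real.zero_rpow hp0.ne', mul_zero]
  · calc |f j| = |f j| ^ (1 - p) * |f j| ^ p := by
          rw [← Real.rpow_add hpos, sub_add_cancel, Real.rpow_one]
      _ ≤ pNorm p f ^ (1 - p) * |f j| ^ p := by
          gcongr
          exact abs_apply_le_pNorm hp0 hf j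

theorem pNorm_sum_le (hp0 : 0 < p) (hp1 : p ≤ 1) {A : Finset ι} {x : ι → ℕ → ℝ} {C : ℝ}
    (hC : 0 ≤ C) (hx : ∀ i ∈ A, MemLpSeq p (x i)) (hxC : ∀ i ∈ A, pNorm p (x i) ≤ C) :
    pNorm p (∑ i ∈ A, x i) ≤ C * (A.card : ℝ) ^ (1 / p) := by
  rw [← Real.rpow_le_rpow_iff (pNorm_nonneg _ _) (by positivity) hp0, pNorm_rpow hp0,
    Real.mul_rpow hC (by positivity), ← Real.rpow_mul (Nat.cast_nonneg _),
    one_div_mul_cancel hp0.ne', Real.rpow_one]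
  calc pModular p (∑ i ∈ A, x i) ≤ ∑ i ∈ A, pModular p (x i) := by
        simpa using pModular_sum_smul_le hp0 hp1 hx 1
    _ ≤ ∑ _i ∈ A, C ^ p := Finset.sum_le_sum fun i hi => by
        rw [← pNorm_rpow hp0]
        exact Real.rpow_le_rpow (pNorm_nonneg _ _) (hxC i hi) hp0.le
    _ = C ^ p * A.card := by rw [Finset.sum_const, nsmul_eq_mul, mul_comm]

theorem pModular_sub_sum_single (hp0 : 0 < p) (f : ℕ → ℝ) (J : Finset ℕ) :
    pModular p (f - ∑ j ∈ J, f j • Pi.single j 1) = ∑' j : {j // j ∉ J}, |f j| ^ p := by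
  rw [pModular]
  refine Eq.trans (tsum_congr fun j => ?_) (tsum_subtype {j | j ∉ J} fun j => |f j| ^ p).symm
  by_cases hj : j ∈ J <;>
    simp [Finset.sum_apply, Pi.single_apply, hj, Real.zero_rpow hp0.ne']

theorem tendsto_pNorm_sub_sum_single (hp0 : 0 < p) (f : ℕ → ℝ) :
    Filter.Tendsto (fun J : Finset ℕ => pNorm p (f - ∑ j ∈ J, f j • Pi.single j 1))
      Filter.atTop (nhds 0) := by
  have htail := (tendsto_tsum_compl_atTop_zero fun j => |f j| ^ p).rpow_const
    (p := 1 / p) (Or.inr (by positivity))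
  simpa only [pNorm_eq_pModular_rpow, pModular_sub_sum_single hp0,
    Real.zero_rpow (one_div_pos.2 hp0).ne'] using htail

end Modular

section SuppressionUnconditional

variable {p κ : ℝ} {ι : Type*} {x : ι → ℕ → ℝ}

/-- Suppression unconditionality for constant coefficients: passing to a subset of the index set
increases the modular of a signed sum of the `x n` at most by the factor `κ`. -/
def IsSUCC (p κ : ℝ) (x : ι → ℕ → ℝ) : Prop :=
  ∀ (A D : Finset ι) (ε : ι → ℝ), D ⊆ A → (∀ n, |ε n| = 1) →
    pModular p (∑ n ∈ D, ε n • x n) ≤ κ * pModular p (∑ n ∈ A, ε n • x n)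

theorem IsSUCC.pModular_sum_sign_le (hp0 : 0 < p) (hp1 : p ≤ 1) (hx : ∀ n, MemLpSeq p (x n))
    (h : IsSUCC p κ x) (A : Finset ι) {δ ε : ι → ℝ} (hδ : ∀ n, |δ n| = 1)
    (hε : ∀ n, |ε n| = 1) :
    pModular p (∑ n ∈ A, δ n • x n) ≤ 2 * κ * pModular p (∑ n ∈ A, ε n • x n) := by
  have hsplit : ∑ n ∈ A, δ n • x n =
      ∑ n ∈ A with δ n = ε n, ε n • x n - ∑ n ∈ A with ¬δ n = ε n, ε n • x n := by
    rw [← Finset.sum_filter_add_sum_filter_not A (fun n => δ n = ε n), sub_eq_add_neg,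
      ← Finset.sum_neg_distrib]
    congr 1 <;> refine Finset.sum_congr rfl fun n hn => ?_
    · rw [(Finset.mem_filter.1 hn).2]
    · have hopp : δ n = -ε n :=
        (abs_eq_abs.1 ((hδ n).trans (hε n).symm)).resolve_left (Finset.mem_filter.1 hn).2
      rw [hopp, neg_smul]
  have hmem (D : Finset ι) : MemLpSeq p (∑ n ∈ D, ε n • x n) :=
    MemLpSeq.sum_smul hp0 (fun n _ => hx n) ε
  rw [hsplit, mul_assoc, two_mul]
  exact (pModular_sub_le hp0 hp1 (hmem _) (hmem _)).trans
    (add_le_add (h A _ ε (Finset.filter_subset _ A) hε) (h A _ ε (Finset.filter_subset _ A) hε))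

theorem IsSUCC.exists_two_rpow_mul_pModular_sum_smul_le (hp0 : 0 < p) (hp1 : p ≤ 1)
    (hx : ∀ n, MemLpSeq p (x n)) (h : IsSUCC p κ x) {A : Finset ι} {d : ι → ℝ}
    (hd : ∀ n ∈ A, |d n| ≤ 1) :
    ∃ d' : ι → ℝ, (∀ n ∈ A, |d' n| ≤ 1) ∧ 2 ^ p * pModular p (∑ n ∈ A, d n • x n) ≤
      2 * κ * pModular p (∑ n ∈ A, x n) + pModular p (∑ n ∈ A, d' n • x n) := by
  choose ε hε hdε using fun n => exists_abs_eq_one_and_eq_mul_abs (d n)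
  have hmem (c : ι → ℝ) : MemLpSeq p (∑ n ∈ A, c n • x n) :=
    MemLpSeq.sum_smul hp0 (fun n _ => hx n) c
  refine ⟨fun n => 2 * d n - ε n, fun n hn => ?_, ?_⟩
  · have hfactor : 2 * d n - ε n = ε n * (2 * |d n| - 1) := by
      linear_combination 2 * hdε n
    change |2 * d n - ε n| ≤ 1
    rw [hfactor, abs_mul, hε, one_mul, abs_le]
    constructor <;> linarith [hd n hn, abs_nonneg (d n)]
  · have hdouble : (2 : ℝ) • ∑ n ∈ A, d n • x n =
        ∑ n ∈ A, ε n • x n + ∑ n ∈ A, (2 * d n - ε n) • x n := by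
      rw [Finset.smul_sum, ← Finset.sum_add_distrib]
      exact Finset.sum_congr rfl fun n _ => by module
    calc 2 ^ p * pModular p (∑ n ∈ A, d n • x n)
        = pModular p (∑ n ∈ A, ε n • x n + ∑ n ∈ A, (2 * d n - ε n) • x n) := by
          rw [← hdouble, pModular_const_smul, abs_two]
      _ ≤ pModular p (∑ n ∈ A, ε n • x n) + pModular p (∑ n ∈ A, (2 * d n - ε n) • x n) :=
          pModular_add_le hp0 hp1 (hmem _) (hmem _)
      _ ≤ _ := by
          gcongr
          simpa using h.pModular_sum_sign_le hp0 hp1 hx A hε (fun _ => abs_one)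

theorem IsSUCC.pModular_sum_smul_le_of_abs_le_one (hp0 : 0 < p) (hp1 : p ≤ 1)
    (hx : ∀ n, MemLpSeq p (x n)) (h : IsSUCC p κ x) {A : Finset ι} {d : ι → ℝ}
    (hd : ∀ n ∈ A, |d n| ≤ 1) :
    pModular p (∑ n ∈ A, d n • x n) ≤ 2 * κ / (2 ^ p - 1) * pModular p (∑ n ∈ A, x n) := by
  let Multiplier := {d : ι → ℝ // ∀ n ∈ A, |d n| ≤ 1}
  let F : Multiplier → ℝ := fun d => pModular p (∑ n ∈ A, d.1 n • x n)
  have hbdd : BddAbove (Set.range F) := by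
    refine ⟨∑ n ∈ A, pModular p (x n), ?_⟩
    rintro _ ⟨e, rfl⟩
    refine (pModular_sum_smul_le hp0 hp1 (fun n _ => hx n) e.1).trans
      (Finset.sum_le_sum fun n hn => mul_le_of_le_one_left (pModular_nonneg p _) ?_)
    exact Real.rpow_le_one (abs_nonneg _) (e.2 n hn) hp0.le
  have htwo : (1 : ℝ) < 2 ^ p := Real.one_lt_rpow one_lt_two hp0
  have : Nonempty Multiplier := ⟨⟨d, hd⟩⟩
  have hsup : ⨆ e, F e ≤ (2 * κ * pModular p (∑ n ∈ A, x n) + ⨆ e, F e) / 2 ^ p := by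
    refine ciSup_le fun e => ?_
    obtain ⟨e', he', hle⟩ := h.exists_two_rpow_mul_pModular_sum_smul_le hp0 hp1 hx e.2
    rw [le_div_iff₀' (one_pos.trans htwo)]
    exact hle.trans (add_le_add_right (le_ciSup hbdd ⟨e', he'⟩) _)
  refine (le_ciSup hbdd ⟨d, hd⟩).trans ?_
  rw [le_div_iff₀ (one_pos.trans htwo)] at hsup
  rw [div_mul_eq_mul_div, le_div_iff₀ (sub_pos.2 htwo)]
  linarith

theorem IsSUCC.rpow_mul_pModular_sum_le_add (hp0 : 0 < p) (hp1 : p ≤ 1)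
    (hx : ∀ n, MemLpSeq p (x n)) (hκ : 0 ≤ κ) (h : IsSUCC p κ x) {A : Finset ι} {a : ι → ℝ}
    {t η : ℝ} (ht : 0 < t) (hη : 0 < η) (ha : ∀ n ∈ A, t ≤ |a n| ∧ |a n| ≤ (1 + η) * t) :
    t ^ p * pModular p (∑ n ∈ A, x n) ≤ 2 * κ * (pModular p (∑ n ∈ A, a n • x n) +
      (t * η) ^ p * (2 * κ / (2 ^ p - 1) * pModular p (∑ n ∈ A, x n))) := by
  choose ε hε haε using fun n => exists_abs_eq_one_and_eq_mul_abs (a n)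
  have hmem (c : ι → ℝ) : MemLpSeq p (∑ n ∈ A, c n • x n) :=
    MemLpSeq.sum_smul hp0 (fun n _ => hx n) c
  have htη : 0 < t * η := mul_pos ht hη
  set d : ι → ℝ := fun n => (t * ε n - a n) / (t * η)
  have hd : ∀ n ∈ A, |d n| ≤ 1 := fun n hn => by
    have hfactor : t * ε n - a n = ε n * (t - |a n|) := by linear_combination -haε n
    rw [abs_div, hfactor, abs_mul, hε, one_mul, abs_of_pos htη, div_le_one htη, abs_le]
    constructor <;> linarith [ha n hn]
  have hflat : t • ∑ n ∈ A, ε n • x n =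
      ∑ n ∈ A, a n • x n + (t * η) • ∑ n ∈ A, d n • x n := by
    rw [Finset.smul_sum, Finset.smul_sum, ← Finset.sum_add_distrib]
    refine Finset.sum_congr rfl fun n _ => ?_
    rw [smul_smul, smul_smul, ← add_smul, mul_div_cancel₀ _ htη.ne', add_sub_cancel]
  calc t ^ p * pModular p (∑ n ∈ A, x n)
      ≤ t ^ p * (2 * κ * pModular p (∑ n ∈ A, ε n • x n)) := by
        gcongr
        simpa using h.pModular_sum_sign_le hp0 hp1 hx A (fun _ => abs_one) hε
    _ = 2 * κ * pModular p (∑ n ∈ A, a n • x n + (t * η) • ∑ n ∈ A, d n • x n) := by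
        rw [← hflat, pModular_const_smul, abs_of_pos ht]; ring
    _ ≤ 2 * κ * (pModular p (∑ n ∈ A, a n • x n) +
          (t * η) ^ p * pModular p (∑ n ∈ A, d n • x n)) := by
        gcongr
        refine (pModular_add_le hp0 hp1 (hmem a) ((hmem d).const_smul hp0 _)).trans_eq ?_
        rw [pModular_const_smul, abs_of_pos htη]
    _ ≤ _ := by
        gcongr
        exact h.pModular_sum_smul_le_of_abs_le_one hp0 hp1 hx hd

theorem IsSUCC.exists_rpow_mul_pModular_sum_le (hp0 : 0 < p) (hp1 : p ≤ 1)
    (hx : ∀ n, MemLpSeq p (x n)) (hκ : 0 < κ) (h : IsSUCC p κ x) :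
    ∃ r > 1, ∀ (A : Finset ι) (a : ι → ℝ), ∀ t > 0, (∀ n ∈ A, t ≤ |a n| ∧ |a n| ≤ r * t) →
      t ^ p * pModular p (∑ n ∈ A, x n) ≤ 4 * κ * pModular p (∑ n ∈ A, a n • x n) := by
  have hK : 0 < 2 * κ / (2 ^ p - 1) :=
    div_pos (by positivity) (sub_pos.2 (Real.one_lt_rpow one_lt_two hp0))
  set K := 2 * κ / (2 ^ p - 1)
  set η : ℝ := (1 / (4 * κ * K)) ^ (1 / p)
  have hη : 0 < η := by positivity
  have hηp : 2 * κ * (η ^ p * K) = 1 / 2 := by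
    rw [← Real.rpow_mul (by positivity), one_div_mul_cancel hp0.ne', Real.rpow_one]
    field_simp
    norm_num
  refine ⟨1 + η, by linarith, fun A a t ht ha => ?_⟩
  have hle := h.rpow_mul_pModular_sum_le_add hp0 hp1 hx hκ.le ht hη ha
  rw [Real.mul_rpow ht.le hη.le] at hle
  linear_combination 2 * hle + 2 * t ^ p * pModular p (∑ n ∈ A, x n) * hηp

/-- The square function `(∑_{n ∈ A} |x_n|²)^{1/2}`, taken coordinatewise. -/
noncomputable def squareFunction (x : ι → ℕ → ℝ) (A : Finset ι) (j : ℕ) : ℝ :=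
  √(∑ n ∈ A, x n j ^ 2)

theorem abs_apply_le_squareFunction {A : Finset ι} {n : ι} (hn : n ∈ A) (j : ℕ) :
    |x n j| ≤ squareFunction x A j :=
  Real.abs_le_sqrt (Finset.single_le_sum (f := fun n => x n j ^ 2) (fun _ _ => sq_nonneg _) hn)

theorem two_pow_card_mul_squareFunction_rpow_le [DecidableEq ι] (hp0 : 0 < p) (hp2 : p ≤ 2)
    (x : ι → ℕ → ℝ) (A : Finset ι) (j : ℕ) :
    2 ^ A.card * |squareFunction x A j| ^ p ≤
      4 * ∑ T ∈ A.powerset, |(∑ n ∈ A, subsetSign T n • x n) j| ^ p := by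
  simpa [squareFunction, abs_of_nonneg, Finset.sum_apply] using
    khintchine_lower hp0 hp2 A fun n => x n j

theorem memLpSeq_squareFunction (hp0 : 0 < p) (hp2 : p ≤ 2) (hx : ∀ n, MemLpSeq p (x n))
    (A : Finset ι) : MemLpSeq p (squareFunction x A) := by
  classical
  have hmem : ∀ T ∈ A.powerset, MemLpSeq p (∑ n ∈ A, subsetSign T n • x n) :=
    fun T _ => MemLpSeq.sum_smul hp0 (fun n _ => hx n) _
  have hsum := ((summable_sum hmem).mul_left 4).of_nonneg_of_le (fun j => by positivity)
    (two_pow_card_mul_squareFunction_rpow_le hp0 hp2 x A)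
  exact (summable_mul_left_iff (by positivity)).1 hsum

theorem IsSUCC.pModular_squareFunction_le (hp0 : 0 < p) (hp1 : p ≤ 1)
    (hx : ∀ n, MemLpSeq p (x n)) (h : IsSUCC p κ x) (A : Finset ι) :
    pModular p (squareFunction x A) ≤ 8 * κ * pModular p (∑ n ∈ A, x n) := by
  classical
  have hp2 : p ≤ 2 := by linarith
  have hmem : ∀ T ∈ A.powerset, MemLpSeq p (∑ n ∈ A, subsetSign T n • x n) :=
    fun T _ => MemLpSeq.sum_smul hp0 (fun n _ => hx n) _
  have hpow : (0 : ℝ) < 2 ^ A.card := by positivity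
  refine le_of_mul_le_mul_left ?_ hpow
  calc 2 ^ A.card * pModular p (squareFunction x A)
      ≤ 4 * ∑ T ∈ A.powerset, pModular p (∑ n ∈ A, subsetSign T n • x n) := by
        simp_rw [pModular]
        rw [← tsum_mul_left, ← Summable.tsum_finsetSum hmem, ← tsum_mul_left]
        exact ((memLpSeq_squareFunction hp0 hp2 hx A).mul_left _).tsum_le_tsum
          (two_pow_card_mul_squareFunction_rpow_le hp0 hp2 x A) ((summable_sum hmem).mul_left 4)
    _ ≤ 4 * ∑ _T ∈ A.powerset, 2 * κ * pModular p (∑ n ∈ A, x n) := by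
        gcongr with T
        simpa using h.pModular_sum_sign_le hp0 hp1 hx A (abs_subsetSign T) (fun _ => abs_one)
    _ = 2 ^ A.card * (8 * κ * pModular p (∑ n ∈ A, x n)) := by
        rw [Finset.sum_const, Finset.card_powerset, nsmul_eq_mul]
        push_cast
        ring

/-- The sums of `m` of the vectors `x n` have modular at least of the order of `m ^ β`. -/
def HasLowerGrowth (p : ℝ) (x : ι → ℕ → ℝ) (β : ℝ) : Prop :=
  ∃ c > 0, ∀ A : Finset ι, c * (A.card : ℝ) ^ β ≤ pModular p (∑ n ∈ A, x n)

theorem IsSUCC.hasLowerGrowth_of_card_le (hp0 : 0 < p) (hp1 : p ≤ 1)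
    (hx : ∀ n, MemLpSeq p (x n)) (hκ : 0 < κ) (h : IsSUCC p κ x) {β W : ℝ} (hβ : 0 < β)
    (hW : 0 < W) (hcard : ∀ A : Finset ι,
      A.card ≤ (A.card : ℝ) ^ (1 - β) * (W * pModular p (squareFunction x A))) :
    HasLowerGrowth p x β := by
  refine ⟨(W * (8 * κ))⁻¹, by positivity, fun A => ?_⟩
  rw [inv_mul_le_iff₀ (by positivity)]
  rcases A.eq_empty_or_nonempty with rfl | hA
  · rw [Finset.card_empty, Nat.cast_zero, Real.zero_rpow hβ.ne']
    have := pModular_nonneg p (∑ n ∈ (∅ : Finset ι), x n)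
    positivity
  · rw [mul_assoc W]
    exact (rpow_le_of_le_rpow_one_sub_mul (by exact_mod_cast hA.card_pos) (hcard A)).trans
      (mul_le_mul_of_nonneg_left (h.pModular_squareFunction_le hp0 hp1 hx A) hW.le)

theorem sum_abs_rpow_le_mul_squareFunction_rpow (hp0 : 0 < p) (hp2 : p ≤ 2) (x : ι → ℕ → ℝ)
    (A : Finset ι) (j : ℕ) :
    ∑ n ∈ A, |x n j| ^ p ≤ (A.card : ℝ) ^ (1 - p / 2) * |squareFunction x A j| ^ p := by
  have hholder := sum_abs_le_card_rpow_mul A (fun n => |x n j| ^ p) ((one_le_div hp0).2 hp2)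
  have hsq (n : ι) : (|x n j| ^ p) ^ (2 / p) = x n j ^ 2 := by
    rw [← Real.rpow_mul (abs_nonneg _), mul_div_cancel₀ _ hp0.ne', Real.rpow_two, sq_abs]
  simp only [abs_of_nonneg (Real.rpow_nonneg (abs_nonneg (x _ j)) p), hsq, one_div_div] at hholder
  rwa [squareFunction, abs_of_nonneg (Real.sqrt_nonneg _), Real.sqrt_eq_rpow,
    ← Real.rpow_mul (by positivity), one_div_mul_eq_div]

theorem IsSUCC.hasLowerGrowth_half (hp0 : 0 < p) (hp1 : p ≤ 1) (hx : ∀ n, MemLpSeq p (x n))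
    (hκ : 0 < κ) (h : IsSUCC p κ x) {a : ℝ} (ha : 0 < a) (hax : ∀ n, a ≤ pModular p (x n)) :
    HasLowerGrowth p x (p / 2) := by
  have hp2 : p ≤ 2 := by linarith
  refine h.hasLowerGrowth_of_card_le hp0 hp1 hx hκ (by positivity) (inv_pos.2 ha) fun A => ?_
  rw [mul_left_comm, ← div_eq_inv_mul, le_div_iff₀ ha]
  calc A.card * a ≤ ∑ n ∈ A, pModular p (x n) := by
        simpa using A.card_nsmul_le_sum (fun n => pModular p (x n)) a fun n _ => hax n
    _ = ∑' j, ∑ n ∈ A, |x n j| ^ p := (Summable.tsum_finsetSum fun n _ => hx n).symm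
    _ ≤ ∑' j, (A.card : ℝ) ^ (1 - p / 2) * |squareFunction x A j| ^ p :=
        (summable_sum fun n _ => hx n).tsum_le_tsum
          (sum_abs_rpow_le_mul_squareFunction_rpow hp0 hp2 x A)
          ((memLpSeq_squareFunction hp0 hp2 hx A).mul_left _)
    _ = (A.card : ℝ) ^ (1 - p / 2) * pModular p (squareFunction x A) := tsum_mul_left

theorem HasLowerGrowth.exists_mul_rpow_le_pNorm (hp0 : 0 < p) {β : ℝ}
    (h : HasLowerGrowth p x β) :
    ∃ c > 0, ∀ A : Finset ι, c * (A.card : ℝ) ^ (β / p) ≤ pNorm p (∑ n ∈ A, x n) := by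
  obtain ⟨c, hc, hle⟩ := h
  refine ⟨c ^ (1 / p), by positivity, fun A => ?_⟩
  have hroot := Real.rpow_le_rpow (by positivity) (hle A) (one_div_nonneg.2 hp0.le)
  rwa [Real.mul_rpow hc.le (by positivity), ← Real.rpow_mul (by positivity),
    mul_one_div] at hroot

end SuppressionUnconditional

section LpBasis

variable {p κ : ℝ} {x : ℕ → ℕ → ℝ} {xs : ℕ → (ℕ → ℝ) → ℝ} {f g : ℕ → ℝ}

namespace IsLpBasis

theorem coord_smul (hb : IsLpBasis p x xs) (hf : MemLpSeq p f) (n : ℕ) (c : ℝ) :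
    xs n (c • f) = c * xs n f :=
  hb.map_smul n c f hf

theorem coord_sub (hb : IsLpBasis p x xs) (hp0 : 0 < p) (hf : MemLpSeq p f)
    (hg : MemLpSeq p g) (n : ℕ) : xs n (f - g) = xs n f - xs n g := by
  rw [eq_sub_iff_add_eq, ← hb.map_add n _ _ (hf.sub hp0 hg) hg, sub_add_cancel]

theorem coord_sum_smul (hb : IsLpBasis p x xs) (hp0 : 0 < p) {ι : Type*} (s : Finset ι)
    {y : ι → ℕ → ℝ} (hy : ∀ i, MemLpSeq p (y i)) (c : ι → ℝ) (n : ℕ) :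
    xs n (∑ i ∈ s, c i • y i) = ∑ i ∈ s, c i * xs n (y i) := by
  classical
  induction s using Finset.induction_on with
  | empty => simpa using hb.coord_smul (hb.mem n) n 0
  | insert i s hi ih =>
    rw [Finset.sum_insert hi, Finset.sum_insert hi,
      hb.map_add n _ _ ((hy i).const_smul hp0 _) (MemLpSeq.sum_smul hp0 (fun i _ => hy i) c),
      hb.coord_smul (hy i), ih]

theorem coord_sum_smul_basis (hb : IsLpBasis p x xs) (hp0 : 0 < p) (A : Finset ℕ) (c : ℕ → ℝ)
    (m : ℕ) : xs m (∑ n ∈ A, c n • x n) = if m ∈ A then c m else 0 := by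
  simp_rw [hb.coord_sum_smul hp0 A hb.mem, hb.biorth, mul_ite, mul_one, mul_zero,
    Finset.sum_ite_eq]

theorem exists_abs_coord_le (hb : IsLpBasis p x xs) :
    ∃ b > 0, ∀ n f, MemLpSeq p f → |xs n f| ≤ b * pNorm p f := by
  obtain ⟨b, hbdd⟩ := hb.bdd
  refine ⟨max b 1, by positivity, fun n f hf => (hbdd n f hf).trans ?_⟩
  exact mul_le_mul_of_nonneg_right (le_max_left b 1) (pNorm_nonneg p f)

theorem exists_pNorm_le (hb : IsLpBasis p x xs) : ∃ C > 0, ∀ n, pNorm p (x n) ≤ C := by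
  obtain ⟨c, hc, hle⟩ := hb.norm_lb
  obtain ⟨C, hC⟩ := hb.norm_ub
  exact ⟨C, hc.trans_le ((hle 0).trans (hC 0)), hC⟩

theorem finite_setOf_lt_abs_coord (hb : IsLpBasis p x xs) (hp0 : 0 < p) (hf : MemLpSeq p f)
    {t : ℝ} (ht : 0 < t) : {n | t < |xs n f|}.Finite := by
  obtain ⟨b, hb0, hbdd⟩ := hb.exists_abs_coord_le
  obtain ⟨A, c, hlt⟩ := hb.dense f hf (t / b) (by positivity)
  have hcomb : MemLpSeq p (∑ n ∈ A, c n • x n) := MemLpSeq.sum_smul hp0 (fun n _ => hb.mem n) c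
  have hdiff : (fun j => f j - ∑ n ∈ A, c n * x n j) = f - ∑ n ∈ A, c n • x n := by
    ext j; simp [Finset.sum_apply]
  rw [hdiff, lt_div_iff₀' hb0] at hlt
  refine A.finite_toSet.subset fun n hn => by_contra fun hnA => ?_
  rw [Finset.mem_coe] at hnA
  have hsub := hbdd n _ (hf.sub hp0 hcomb)
  rw [hb.coord_sub hp0 hf hcomb, hb.coord_sum_smul_basis hp0, if_neg hnA, sub_zero] at hsub
  exact (hn.trans_le hsub).not_gt hlt

theorem hasSum_coord (hb : IsLpBasis p x xs) (hp0 : 0 < p) (hf : MemLpSeq p f) (n : ℕ) :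
    HasSum (fun j => f j * xs n (Pi.single j 1)) (xs n f) := by
  obtain ⟨b, -, hbdd⟩ := hb.exists_abs_coord_le
  have hsingle (j : ℕ) : MemLpSeq p (Pi.single j 1) := memLpSeq_single hp0 j 1
  have hbound (J : Finset ℕ) : ‖∑ j ∈ J, f j * xs n (Pi.single j 1) - xs n f‖ ≤
      b * pNorm p (f - ∑ j ∈ J, f j • Pi.single j 1) := by
    have hpartial := MemLpSeq.sum_smul hp0 (A := J) (fun j _ => hsingle j) f
    rw [norm_sub_rev, ← hb.coord_sum_smul hp0 J hsingle f n, ← hb.coord_sub hp0 hf hpartial]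
    exact hbdd n _ (hf.sub hp0 hpartial)
  have hlim := (tendsto_pNorm_sub_sum_single hp0 f).const_mul b
  rw [mul_zero] at hlim
  exact tendsto_sub_nhds_zero_iff.1 (squeeze_zero_norm hbound hlim)

end IsLpBasis

/-- Quasi-greediness with constant `κ`, measured by the modular instead of the `p`-norm. -/
def QuasiGreedyWith (p κ : ℝ) (x : ℕ → ℕ → ℝ) (xs : ℕ → (ℕ → ℝ) → ℝ) : Prop :=
  ∀ f, MemLpSeq p f → ∀ A : Finset ℕ, GreedySet (fun n => xs n f) A →
    pModular p (∑ n ∈ A, xs n f • x n) ≤ κ * pModular p f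

theorem QuasiGreedy.exists_quasiGreedyWith (hp0 : 0 < p) (h : QuasiGreedy p x xs) :
    ∃ κ > 0, QuasiGreedyWith p κ x xs := by
  obtain ⟨C, hC, hle⟩ := h
  have hC0 : 0 < C := one_pos.trans_le hC
  refine ⟨C ^ p, by positivity, fun f hf A hA => ?_⟩
  have hsum : ∑ n ∈ A, xs n f • x n = fun j => ∑ n ∈ A, xs n f * x n j := by
    ext j; simp [Finset.sum_apply]
  rw [hsum, ← pNorm_rpow hp0, ← pNorm_rpow hp0, ← Real.mul_rpow hC0.le (pNorm_nonneg p f)]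
  exact Real.rpow_le_rpow (pNorm_nonneg p _) (hle f hf A hA) hp0.le

namespace QuasiGreedyWith

theorem isSUCC (h : QuasiGreedyWith p κ x xs) (hb : IsLpBasis p x xs) (hp0 : 0 < p) :
    IsSUCC p κ x := by
  intro A D ε hDA hε
  set f := ∑ n ∈ A, ε n • x n
  have hcoord (m : ℕ) : xs m f = if m ∈ A then ε m else 0 := hb.coord_sum_smul_basis hp0 A ε m
  have hgreedy : GreedySet (fun n => xs n f) D := fun n hn k _ => by
    simp only [hcoord, if_pos (hDA hn), hε n]
    split_ifs
    · exact (hε k).le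
    · simp
  have hproj : ∑ n ∈ D, xs n f • x n = ∑ n ∈ D, ε n • x n :=
    Finset.sum_congr rfl fun n hn => by rw [hcoord, if_pos (hDA hn)]
  exact hproj ▸ h f (MemLpSeq.sum_smul hp0 (fun n _ => hb.mem n) ε) D hgreedy

theorem exists_layer (h : QuasiGreedyWith p κ x xs) (hb : IsLpBasis p x xs) (hp0 : 0 < p)
    (hp1 : p ≤ 1) (hf : MemLpSeq p f) {s t : ℝ} (ht : 0 < t) (hts : t ≤ s) :
    ∃ G : Finset ℕ, (∀ n, n ∈ G ↔ t < |xs n f| ∧ |xs n f| ≤ s) ∧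
      pModular p (∑ n ∈ G, xs n f • x n) ≤ 2 * κ * pModular p f := by
  have hlevel : ∀ u > 0, ∃ L : Finset ℕ, (∀ n, n ∈ L ↔ u < |xs n f|) ∧
      pModular p (∑ n ∈ L, xs n f • x n) ≤ κ * pModular p f := fun u hu => by
    have hfin := hb.finite_setOf_lt_abs_coord hp0 hf hu
    refine ⟨hfin.toFinset, fun n => hfin.mem_toFinset, h f hf _ fun n hn k hk => ?_⟩
    rw [hfin.mem_toFinset] at hn hk
    exact (not_lt.1 hk).trans hn.le
  obtain ⟨Lt, hLt, hmodt⟩ := hlevel t ht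
  obtain ⟨Ls, hLs, hmods⟩ := hlevel s (ht.trans_le hts)
  have hsubset : Ls ⊆ Lt := fun n hn => (hLt n).2 (hts.trans_lt ((hLs n).1 hn))
  have hmem (L : Finset ℕ) : MemLpSeq p (∑ n ∈ L, xs n f • x n) :=
    MemLpSeq.sum_smul hp0 (fun n _ => hb.mem n) _
  refine ⟨Lt \ Ls, fun n => by rw [Finset.mem_sdiff, hLt, hLs, not_lt], ?_⟩
  rw [Finset.sum_sdiff_eq_sub hsubset, mul_assoc, two_mul]
  exact (pModular_sub_le hp0 hp1 (hmem Lt) (hmem Ls)).trans (add_le_add hmodt hmods)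

theorem exists_card_layer_le (h : QuasiGreedyWith p κ x xs) (hb : IsLpBasis p x xs)
    (hp0 : 0 < p) (hp1 : p ≤ 1) (hκ : 0 < κ) {β : ℝ} (hβ : 0 < β)
    (hgrowth : HasLowerGrowth p x β) :
    ∃ r > 1, ∃ M : ℝ, ∀ f, MemLpSeq p f → pModular p f ≤ 1 → ∀ t > 0, ∀ G : Finset ℕ,
      (∀ n ∈ G, t < |xs n f| ∧ |xs n f| ≤ r * t) → G.card ≤ M * t ^ (-(p / β)) := by
  obtain ⟨c, hc, hlower⟩ := hgrowth
  obtain ⟨r, hr, hflat⟩ :=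
    (h.isSUCC hb hp0).exists_rpow_mul_pModular_sum_le hp0 hp1 hb.mem hκ
  refine ⟨r, hr, (8 * κ ^ 2 / c) ^ (1 / β), fun f hf hf1 t ht G hG => ?_⟩
  obtain ⟨L, hL, hmodL⟩ := h.exists_layer hb hp0 hp1 hf ht (le_mul_of_one_le_left ht.le hr.le)
  have hpow : t ^ p * (c * (L.card : ℝ) ^ β) ≤ 8 * κ ^ 2 :=
    calc t ^ p * (c * (L.card : ℝ) ^ β) ≤ t ^ p * pModular p (∑ n ∈ L, x n) := by
          gcongr; exact hlower L
      _ ≤ 4 * κ * pModular p (∑ n ∈ L, xs n f • x n) :=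
          hflat L _ t ht fun n hn => ((hL n).1 hn).imp_left le_of_lt
      _ ≤ 4 * κ * (2 * κ * 1) := by
          gcongr; exact hmodL.trans (by gcongr)
      _ = 8 * κ ^ 2 := by ring
  have hcard : (L.card : ℝ) ^ β ≤ 8 * κ ^ 2 / c * t ^ (-p) := by
    rw [Real.rpow_neg ht.le, ← div_eq_mul_inv, div_div, le_div_iff₀ (by positivity)]
    linarith
  calc (G.card : ℝ) ≤ L.card := by
        exact_mod_cast Finset.card_le_card fun n hn => (hL n).2 (hG n hn)
    _ = ((L.card : ℝ) ^ β) ^ (1 / β) := by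
        rw [← Real.rpow_mul (by positivity), mul_one_div_cancel hβ.ne', Real.rpow_one]
    _ ≤ (8 * κ ^ 2 / c * t ^ (-p)) ^ (1 / β) := by gcongr
    _ = (8 * κ ^ 2 / c) ^ (1 / β) * t ^ (-(p / β)) := by
        rw [Real.mul_rpow (by positivity) (by positivity), ← Real.rpow_mul ht.le, mul_one_div,
          neg_div]

theorem exists_sum_abs_coord_rpow_le (h : QuasiGreedyWith p κ x xs) (hb : IsLpBasis p x xs)
    (hp0 : 0 < p) (hp1 : p ≤ 1) (hκ : 0 < κ) {β q : ℝ} (hβ : 0 < β)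
    (hgrowth : HasLowerGrowth p x β) (hq : p / β < q) :
    ∃ K > 0, ∀ f, MemLpSeq p f → pModular p f ≤ 1 → ∀ A : Finset ℕ,
      ∑ n ∈ A, |xs n f| ^ q ≤ K := by
  obtain ⟨b, hb0, hbdd⟩ := hb.exists_abs_coord_le
  obtain ⟨r, hr, M, hcard⟩ := h.exists_card_layer_le hb hp0 hp1 hκ hβ hgrowth
  have hq0 : 0 < q := (div_pos hp0 hβ).trans hq
  refine ⟨max _ 1, by positivity, fun f hf hf1 A =>
    (sum_abs_rpow_le_of_card_layer_le hr hb0 hq0 hq (fun n => ?_) (hcard f hf hf1) A).trans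
      (le_max_left _ 1)⟩
  refine (hbdd n f hf).trans (mul_le_of_le_one_right hb0.le ?_)
  exact Real.rpow_le_one (pModular_nonneg p f) hf1 (one_div_nonneg.2 hp0.le)

end QuasiGreedyWith

theorem IsLpBasis.hasLowerGrowth_of_coord_bound (hb : IsLpBasis p x xs) (hp0 : 0 < p)
    (hp1 : p ≤ 1) (hκ : 0 < κ) (hsucc : IsSUCC p κ x) {q K : ℝ} (hq : 1 ≤ q) (hK0 : 0 < K)
    (hK : ∀ (j : ℕ) (A : Finset ℕ), ∑ n ∈ A, |xs n (Pi.single j 1)| ^ q ≤ K) :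
    HasLowerGrowth p x (1 / q) := by
  have hp2 : p ≤ 2 := by linarith
  obtain ⟨C, hC0, hC⟩ := hb.exists_pNorm_le
  refine hsucc.hasLowerGrowth_of_card_le (W := C ^ (1 - p) * K ^ (1 / q)) hp0 hp1 hb.mem hκ
    (by positivity) (by positivity) fun A => ?_
  have htrace : HasSum (fun j => ∑ n ∈ A, x n j * xs n (Pi.single j 1)) A.card := by
    simpa [hb.biorth] using hasSum_sum fun n (_ : n ∈ A) => hb.hasSum_coord hp0 (hb.mem n) n
  have hentry : ∀ j, ∀ n ∈ A, |x n j| ≤ C ^ (1 - p) * |squareFunction x A j| ^ p :=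
    fun j n hn => by
      refine (abs_apply_le_mul_rpow hp0 hp1 (hb.mem n) j).trans ?_
      have hsq := (abs_apply_le_squareFunction hn j).trans (le_abs_self (squareFunction x A j))
      have := pNorm_nonneg p (x n)
      gcongr
      exact hC n
  have hterm (j : ℕ) : ∑ n ∈ A, x n j * xs n (Pi.single j 1) ≤
      (A.card : ℝ) ^ (1 - 1 / q) * (C ^ (1 - p) * K ^ (1 / q)) * |squareFunction x A j| ^ p :=
    calc ∑ n ∈ A, x n j * xs n (Pi.single j 1)
        ≤ ∑ n ∈ A, C ^ (1 - p) * |squareFunction x A j| ^ p * |xs n (Pi.single j 1)| := by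
          refine Finset.sum_le_sum fun n hn => (le_abs_self _).trans ((abs_mul _ _).trans_le ?_)
          gcongr
          exact hentry j n hn
      _ ≤ C ^ (1 - p) * |squareFunction x A j| ^ p *
            ((A.card : ℝ) ^ (1 - 1 / q) * K ^ (1 / q)) := by
          rw [← Finset.mul_sum]
          gcongr
          refine (sum_abs_le_card_rpow_mul A _ hq).trans ?_
          gcongr
          exact hK j A
      _ = _ := by ring
  rw [← mul_assoc]
  exact hasSum_le hterm htrace ((memLpSeq_squareFunction hp0 hp2 hb.mem A).hasSum.mul_left _)

namespace QuasiGreedyWith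

theorem hasLowerGrowth_of_mul_lt (h : QuasiGreedyWith p κ x xs) (hb : IsLpBasis p x xs)
    (hp0 : 0 < p) (hp1 : p ≤ 1) (hκ : 0 < κ) {β γ : ℝ} (hβ : 0 < β)
    (hgrowth : HasLowerGrowth p x β) (hγ0 : 0 < γ) (hγ1 : γ ≤ 1) (hγβ : p * γ < β) :
    HasLowerGrowth p x γ := by
  have hq : p / β < 1 / γ := by rwa [div_lt_div_iff₀ hβ hγ0, one_mul]
  obtain ⟨K, hK0, hK⟩ := h.exists_sum_abs_coord_rpow_le hb hp0 hp1 hκ hβ hgrowth hq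
  rw [← one_div_one_div γ]
  exact hb.hasLowerGrowth_of_coord_bound hp0 hp1 hκ (h.isSUCC hb hp0)
    ((one_le_div hγ0).2 hγ1) hK0
    fun j => hK _ (memLpSeq_single hp0 j 1) (pModular_single_one hp0 j).le

theorem hasLowerGrowth_one (h : QuasiGreedyWith p κ x xs) (hb : IsLpBasis p x xs)
    (hp0 : 0 < p) (hp1 : p < 1) (hκ : 0 < κ) : HasLowerGrowth p x 1 := by
  obtain ⟨a, ha, hax⟩ := hb.norm_lb
  have hstart : HasLowerGrowth p x (p / 2) :=
    (h.isSUCC hb hp0).hasLowerGrowth_half hp0 hp1.le hb.mem hκ (Real.rpow_pos_of_pos ha p)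
      fun n => (Real.rpow_le_rpow ha.le (hax n) hp0.le).trans_eq (pNorm_rpow hp0 _)
  obtain ⟨s, hps, hs1⟩ := exists_between hp1
  have hs0 : 0 < s := hp0.trans hps
  have hiterate (k : ℕ) : ∀ γ, 0 < γ → γ ≤ 1 → s ^ k * γ ≤ p / 2 → HasLowerGrowth p x γ := by
    induction k with
    | zero =>
      intro γ hγ0 hγ1 hγ
      exact h.hasLowerGrowth_of_mul_lt hb hp0 hp1.le hκ (half_pos hp0) hstart hγ0 hγ1
        ((mul_lt_of_lt_one_left hγ0 hp1).trans_le (by simpa using hγ))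
    | succ k ih =>
      intro γ hγ0 hγ1 hγ
      have hsγ : HasLowerGrowth p x (s * γ) :=
        ih (s * γ) (mul_pos hs0 hγ0) (mul_le_one₀ hs1.le hγ0.le hγ1)
          (by rwa [← mul_assoc, ← pow_succ])
      exact h.hasLowerGrowth_of_mul_lt hb hp0 hp1.le hκ (mul_pos hs0 hγ0) hsγ hγ0 hγ1
        (mul_lt_mul_of_pos_right hps hγ0)
  obtain ⟨k, hk⟩ := exists_pow_lt_of_lt_one (half_pos hp0) hs1
  exact hiterate k 1 one_pos le_rfl ((mul_one _).trans_le hk.le)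

end QuasiGreedyWith

end LpBasis

/-- Quasi-greedy bases of `ℓ_p`, `0<p<1`, are democratic, with both democracy
functions of the order of `m^(1/p)`. -/
theorem stmt0 (p : ℝ) (hp0 : 0 < p) (hp1 : p < 1)
    (x : ℕ → ℕ → ℝ) (xs : ℕ → (ℕ → ℝ) → ℝ)
    (hbasis : IsLpBasis p x xs) (hqg : QuasiGreedy p x xs) :
    ∃ c C : ℝ, 0 < c ∧ c ≤ C ∧
      (∀ m : ℕ, 1 ≤ m → ∀ A : Finset ℕ, m ≤ A.card →
        c * (m : ℝ) ^ (1 / p) ≤ pNorm p (fun j => ∑ n ∈ A, x n j)) ∧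
      (∀ m : ℕ, 1 ≤ m → ∀ A : Finset ℕ, A.card ≤ m →
        pNorm p (fun j => ∑ n ∈ A, x n j) ≤ C * (m : ℝ) ^ (1 / p)) ∧
      (∃ D ≥ (1 : ℝ), ∀ A B : Finset ℕ, A.card = B.card →
        pNorm p (fun j => ∑ n ∈ A, x n j) ≤ D * pNorm p (fun j => ∑ n ∈ B, x n j)) := by
  obtain ⟨κ, hκ, hqgκ⟩ := hqg.exists_quasiGreedyWith hp0
  obtain ⟨c, hc, hlower⟩ :=
    (hqgκ.hasLowerGrowth_one hbasis hp0 hp1 hκ).exists_mul_rpow_le_pNorm hp0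
  obtain ⟨C, hC, hCx⟩ := hbasis.exists_pNorm_le
  have hupper (A : Finset ℕ) : pNorm p (∑ n ∈ A, x n) ≤ C * (A.card : ℝ) ^ (1 / p) :=
    pNorm_sum_le hp0 hp1.le hC.le (fun n _ => hbasis.mem n) fun n _ => hCx n
  have hcC : c ≤ C := by simpa using (hlower {0}).trans (hupper {0})
  simp only [← Finset.sum_fn]
  refine ⟨c, C, hc, hcC, fun m _ A hmA => ?_, fun m _ A hAm => ?_,
    C / c, (one_le_div hc).2 hcC, fun A B hAB => ?_⟩
  · exact le_trans (by gcongr) (hlower A)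
  · exact (hupper A).trans (by gcongr)
  · calc pNorm p (∑ n ∈ A, x n) ≤ C / c * (c * (B.card : ℝ) ^ (1 / p)) := by
          rw [← mul_assoc, div_mul_cancel₀ C hc.ne', ← hAB]
          exact hupper A
      _ ≤ C / c * pNorm p (∑ n ∈ B, x n) := by
          gcongr
          exact hlower B
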